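/- arXiv:2412.18761 — 11 statements merged into one kernel-verified Lean document; each statement's English description precedes it below -/
import Mathlib

section
/- Let φ: [0,∞) → ℝ be continuous and strictly decreasing with φ(0) = 1 and φ(t) → 0 as t → ∞, and suppose φ is regularly varying at ∞ with index −α for some α > 0. Then for every d ≥ 2 and every w = (w₁, …, w_d) ∈ (0,∞)^d, the limit lim_{u→0⁺} φ(∑_{i=1}^d φ⁻¹(u·wᵢ)) / u exists and equals (∑_{j=1}^d wⱼ^{−1/α})^{−α}. -/
open Filter Topology

/-- Theorem 2.1(1): lower tail dependence of an Archimedean copula whose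
Laplace transform `φ` is regularly varying at `∞` with index `-α < 0`. -/
theorem archimedean_lower_tail_dependence_regularly_varying
    (φ φinv : ℝ → ℝ)
    (hcont : ContinuousOn φ (Set.Ici 0))
    (hanti : StrictAntiOn φ (Set.Ici 0))
    (hφ0 : φ 0 = 1)
    (hφtop : Tendsto φ atTop (𝓝 0))
    (hinv : ∀ u ∈ Set.Ioc (0:ℝ) 1, 0 ≤ φinv u ∧ φ (φinv u) = u)
    (α : ℝ) (hα : 0 < α)
    (hRV : ∀ x > (0:ℝ), Tendsto (fun t => φ (t * x) / φ t) atTop (𝓝 (x ^ (-α))))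
    (d : ℕ) (hd : 2 ≤ d) (w : Fin d → ℝ) (hw : ∀ i, 0 < w i) :
    Tendsto (fun u => φ (∑ i, φinv (u * w i)) / u) (𝓝[>] (0:ℝ))
      (𝓝 ((∑ j, (w j) ^ (-(1/α))) ^ (-α))) := by
  have hpos : ∀ t, 0 ≤ t → 0 < φ t := by
    intro t ht
    have h1 : φ (t + 1) < φ t := hanti ht (by simp only [Set.mem_Ici]; linarith) (by linarith)
    have h2 : 0 ≤ φ (t + 1) := by
      refine le_of_tendsto hφtop ?_
      filter_upwards [eventually_ge_atTop (t + 1)] with s hs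
      exact hanti.antitoneOn (by simp only [Set.mem_Ici]; linarith)
        (by simp only [Set.mem_Ici]; linarith) hs
    linarith
  have hsmall : ∀ m > (0:ℝ), ∀ᶠ u in 𝓝[>] (0:ℝ), 0 < u ∧ u < m := by
    intro m hm
    exact Ioo_mem_nhdsGT hm
  have hT : Tendsto φinv (𝓝[>] (0:ℝ)) atTop := by
    rw [tendsto_atTop]
    intro b
    have hb : (0:ℝ) ≤ max b 0 := le_max_right _ _
    filter_upwards [hsmall _ (hpos _ hb), hsmall 1 one_pos] with u hu hu1
    obtain ⟨h0, h1⟩ := hinv u ⟨hu.1, hu1.2.le⟩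
    have : max b 0 < φinv u := by
      rw [← hanti.lt_iff_gt h0 hb, h1]
      exact hu.2
    exact (lt_of_le_of_lt (le_max_left _ _) this).le
  have hbase : ∀ᶠ u in 𝓝[>] (0:ℝ), 0 < u ∧ 0 < φinv u ∧ φ (φinv u) = u := by
    filter_upwards [hT.eventually_gt_atTop 0, hsmall 1 one_pos] with u hu hu1
    exact ⟨hu1.1, hu, (hinv u ⟨hu1.1, hu1.2.le⟩).2⟩
  have hR : ∀ x > (0:ℝ), Tendsto (fun u => φ (φinv u * x) / u) (𝓝[>] (0:ℝ)) (𝓝 (x ^ (-α))) := by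
    intro x hx
    refine ((hRV x hx).comp hT).congr' ?_
    filter_upwards [hbase] with u hu
    simp only [Function.comp, hu.2.2]
  have hwpow : ∀ v > (0:ℝ), (v ^ (-(1/α))) ^ (-α) = v := by
    intro v hv
    rw [← Real.rpow_mul hv.le]
    have : -(1/α) * -α = 1 := by field_simp
    rw [this, Real.rpow_one]
  have hL : ∀ v > (0:ℝ), Tendsto (fun u => φinv (u * v) / φinv u) (𝓝[>] (0:ℝ))
      (𝓝 (v ^ (-(1/α)))) := by
    intro v hv
    have hvp : 0 < v ^ (-(1/α)) := Real.rpow_pos_of_pos hv _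
    have hvs : ∀ᶠ u in 𝓝[>] (0:ℝ), 0 ≤ φinv (u * v) ∧ φ (φinv (u * v)) = u * v := by
      filter_upwards [hsmall (1/v) (by positivity)] with u hu
      exact hinv _ ⟨mul_pos hu.1 hv, ((lt_div_iff₀ hv).1 hu.2).le⟩
    rw [tendsto_order]
    constructor
    · intro c hc
      obtain ⟨c1, hc1, hc2⟩ := exists_between (max_lt hc hvp)
      have hc0 : 0 < c1 := lt_of_le_of_lt (le_max_right _ _) hc1
      have hlt : v < c1 ^ (-α) := by
        conv_lhs => rw [← hwpow v hv]
        exact Real.rpow_lt_rpow_of_neg hc0 hc2 (by linarith)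
      filter_upwards [hvs, hbase, (hR c1 hc0).eventually (lt_mem_nhds hlt)] with u h1 h2 h3
      rw [lt_div_iff₀ h2.1] at h3
      have h4 : φinv u * c1 < φinv (u * v) := by
        rw [← hanti.lt_iff_gt h1.1 (mul_pos h2.2.1 hc0).le, h1.2]
        linarith
      rw [lt_div_iff₀ h2.2.1]
      have : c < c1 := lt_of_le_of_lt (le_max_left _ _) hc1
      nlinarith [h2.2.1]
    · intro c hc
      have hc0 : 0 < c := hvp.trans hc
      have hlt : c ^ (-α) < v := by
        conv_rhs => rw [← hwpow v hv]
        exact Real.rpow_lt_rpow_of_neg hvp hc (by linarith)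
      filter_upwards [hvs, hbase, (hR c hc0).eventually (gt_mem_nhds hlt)] with u h1 h2 h3
      rw [div_lt_iff₀ h2.1] at h3
      have h4 : φinv (u * v) < φinv u * c := by
        rw [← hanti.lt_iff_gt (mul_pos h2.2.1 hc0).le h1.1, h1.2]
        linarith
      rw [div_lt_iff₀ h2.2.1]
      linarith
  have hsum : Tendsto (fun u => (∑ i, φinv (u * w i)) / φinv u) (𝓝[>] (0:ℝ))
      (𝓝 (∑ j, (w j) ^ (-(1/α)))) := by
    simp only [Finset.sum_div]
    exact tendsto_finsetSum _ fun i _ => hL (w i) (hw i)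
  have hS : 0 < ∑ j, (w j) ^ (-(1/α)) :=
    Finset.sum_pos (fun i _ => Real.rpow_pos_of_pos (hw i) _) ⟨⟨0, by omega⟩, Finset.mem_univ _⟩
  generalize (∑ j, (w j) ^ (-(1/α))) = S at hsum hS
  have hc : Tendsto (fun c : ℝ => c ^ (-α)) (𝓝 S) (𝓝 (S ^ (-α))) :=
    Real.continuousAt_rpow_const S (-α) (Or.inl hS.ne')
  rw [tendsto_order]
  constructor
  · intro a ha
    obtain ⟨c, hca, hcS⟩ := (((hc.eventually (lt_mem_nhds ha)).filter_mono
      nhdsWithin_le_nhds).and (self_mem_nhdsWithin : Set.Ioi S ∈ 𝓝[>] S)).exists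
    have hcS : S < c := hcS
    have hc0 : 0 < c := hS.trans hcS
    filter_upwards [hbase, hsum.eventually (gt_mem_nhds hcS), hsum.eventually (lt_mem_nhds hS),
      (hR c hc0).eventually (lt_mem_nhds hca)] with u h1 h2 h3 h4
    refine h4.trans ?_
    rw [div_lt_iff₀ h1.2.1] at h2
    rw [lt_div_iff₀ h1.2.1] at h3
    refine div_lt_div_of_pos_right (hanti ?_ ?_ ?_) h1.1
    · simp only [Set.mem_Ici]; linarith
    · exact (mul_pos h1.2.1 hc0).le
    · linarith
  · intro a ha
    obtain ⟨c, ⟨hca, hc0⟩, hcS⟩ := ((((hc.eventually (gt_mem_nhds ha)).and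
      (lt_mem_nhds hS)).filter_mono
      nhdsWithin_le_nhds).and (self_mem_nhdsWithin : Set.Iio S ∈ 𝓝[<] S)).exists
    have hcS : c < S := hcS
    filter_upwards [hbase, hsum.eventually (lt_mem_nhds hcS), hsum.eventually (lt_mem_nhds hS),
      (hR c hc0).eventually (gt_mem_nhds hca)] with u h1 h2 h3 h4
    refine lt_trans ?_ h4
    rw [lt_div_iff₀ h1.2.1] at h2 h3
    refine div_lt_div_of_pos_right (hanti ?_ ?_ ?_) h1.1
    · exact (mul_pos h1.2.1 hc0).le
    · simp only [Set.mem_Ici]; linarith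
    · linarith
end

section
/- Let φ: [0,∞) → ℝ be continuous and strictly decreasing with φ(0) = 1 and φ(t) → 0 as t → ∞, and suppose the map u ↦ φ⁻¹(1−u) is regularly varying at 0 with index β for some β > 0, i.e. φ⁻¹(1−ux)/φ⁻¹(1−u) → x^β as u → 0⁺ for every x > 0. Then for every d ≥ 2 and every w = (w₁, …, w_d) ∈ [0,∞)^d, the limit lim_{u→0⁺} (1 − φ(∑_{i=1}^d φ⁻¹(1 − u·wᵢ))) / u exists and equals (∑_{j=1}^d wⱼ^β)^{1/β}. -/
open Filter Topology

/-- Theorem 2.1(2): upper exponent function of an Archimedean copula whose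
generator `φ⁻¹` is regularly varying at `1` with index `β > 0`. -/
theorem archimedean_upper_exponent_function_regularly_varying
    (φ φinv : ℝ → ℝ)
    (hcont : ContinuousOn φ (Set.Ici 0))
    (hanti : StrictAntiOn φ (Set.Ici 0))
    (hφ0 : φ 0 = 1)
    (hφtop : Tendsto φ atTop (𝓝 0))
    (hinv : ∀ u ∈ Set.Ioc (0:ℝ) 1, 0 ≤ φinv u ∧ φ (φinv u) = u)
    (β : ℝ) (hβ : 0 < β)
    (hRV : ∀ x > (0:ℝ),
      Tendsto (fun u => φinv (1 - u * x) / φinv (1 - u)) (𝓝[>] (0:ℝ)) (𝓝 (x ^ β)))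
    (d : ℕ) (hd : 2 ≤ d) (w : Fin d → ℝ) (hw : ∀ i, 0 ≤ w i) :
    Tendsto (fun u => (1 - φ (∑ i, φinv (1 - u * w i))) / u) (𝓝[>] (0:ℝ))
      (𝓝 ((∑ j, (w j) ^ β) ^ (1/β))) := by
  have hev : ∀ c : ℝ, ∀ᶠ u in 𝓝[>] (0:ℝ), u * c < 1 := by
    intro c
    have h : Tendsto (fun u : ℝ => u * c) (𝓝[>] (0:ℝ)) (𝓝 (0 * c)) :=
      ((continuous_id.mul continuous_const).tendsto 0).mono_left nhdsWithin_le_nhds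
    rw [zero_mul] at h
    exact h.eventually (gt_mem_nhds one_pos)
  have hpos : ∀ᶠ u in 𝓝[>] (0:ℝ), 0 < u := self_mem_nhdsWithin
  have hinv1 : φinv 1 = 0 := by
    obtain ⟨h1, h2⟩ := hinv 1 (by simp)
    exact hanti.injOn h1 (by simp : (0:ℝ) ∈ Set.Ici 0) (by rw [h2, hφ0])
  have hg : ∀ᶠ u in 𝓝[>] (0:ℝ), 0 < φinv (1 - u) := by
    filter_upwards [hpos, hev 1] with u h0 h1
    obtain ⟨h2, h3⟩ := hinv (1 - u) ⟨by linarith, by linarith⟩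
    rcases h2.lt_or_eq with h | h
    · exact h
    · rw [← h, hφ0] at h3
      linarith
  have hS0 : ∀ᶠ u in 𝓝[>] (0:ℝ), 0 ≤ ∑ i, φinv (1 - u * w i) := by
    have hall : ∀ᶠ u in 𝓝[>] (0:ℝ), ∀ i, u * w i < 1 := eventually_all.2 fun i => hev (w i)
    filter_upwards [hpos, hall] with u h0 h1
    refine Finset.sum_nonneg fun i _ => (hinv _ ⟨by linarith [h1 i], ?_⟩).1
    linarith [mul_nonneg h0.le (hw i)]
  have hlim : Tendsto (fun u => (∑ i, φinv (1 - u * w i)) / φinv (1 - u)) (𝓝[>] (0:ℝ))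
      (𝓝 (∑ j, (w j) ^ β)) := by
    simp only [Finset.sum_div]
    refine tendsto_finsetSum _ fun i _ => ?_
    rcases (hw i).lt_or_eq with h | h
    · exact hRV _ h
    · simp [← h, hinv1, Real.zero_rpow hβ.ne']
  have hA : 0 ≤ ∑ j, (w j) ^ β := Finset.sum_nonneg fun i _ => Real.rpow_nonneg (hw i) _
  set A := ∑ j, (w j) ^ β with hAdef
  have hL0 : 0 ≤ A ^ (1/β) := Real.rpow_nonneg hA _
  have hLA : (A ^ (1/β)) ^ β = A := by
    rw [← Real.rpow_mul hA, one_div_mul_cancel hβ.ne', Real.rpow_one]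
  rw [tendsto_order]
  constructor
  · intro a ha
    rcases lt_or_ge a 0 with h | h
    · filter_upwards [hpos, hS0] with u h0 h1
      have h2 : φ (∑ i, φinv (1 - u * w i)) ≤ φ 0 :=
        hanti.antitoneOn (by simp : (0:ℝ) ∈ Set.Ici 0) h1 h1
      rw [hφ0] at h2
      exact h.trans_le (div_nonneg (by linarith) h0.le)
    · obtain ⟨b, hab, hbL⟩ := exists_between ha
      have hb : 0 < b := h.trans_lt hab
      have hbA : b ^ β < A := by
        rw [← hLA]
        exact Real.rpow_lt_rpow hb.le hbL hβ
      filter_upwards [hpos, hS0, hg, hev b, (hRV b hb).eventually_lt hlim hbA]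
        with u h0 h1 h2 h3 h4
      rw [div_lt_div_iff_of_pos_right h2] at h4
      obtain ⟨h5, h6⟩ := hinv (1 - u * b) ⟨by linarith, by linarith [mul_pos h0 hb]⟩
      have h7 := hanti h5 h1 h4
      rw [h6] at h7
      rw [lt_div_iff₀ h0]
      nlinarith
  · intro b hbL
    have hb : 0 < b := hL0.trans_lt hbL
    have hbA : A < b ^ β := by
      rw [← hLA]
      exact Real.rpow_lt_rpow hL0 hbL hβ
    filter_upwards [hpos, hS0, hg, hev b, hlim.eventually_lt (hRV b hb) hbA]
      with u h0 h1 h2 h3 h4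
    rw [div_lt_div_iff_of_pos_right h2] at h4
    obtain ⟨h5, h6⟩ := hinv (1 - u * b) ⟨by linarith, by linarith [mul_pos h0 hb]⟩
    have h7 := hanti h1 h5 h4
    rw [h6] at h7
    rw [div_lt_iff₀ h0]
    linarith
end

section
/- Let φ: [0,∞) → ℝ be continuous and strictly decreasing with φ(0) = 1 and φ(t) → 0 as t → ∞, and suppose φ is slowly varying at ∞ (i.e. φ(λt)/φ(t) → 1 as t → ∞ for every λ > 0). Then for every λ > 1, φ⁻¹(λu)/φ⁻¹(u) → 0 as u → 0⁺. -/
open Filter Topology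

/-- If the Laplace transform `φ` is slowly varying at `∞`, then its inverse
satisfies `φ⁻¹(λu)/φ⁻¹(u) → 0` as `u → 0⁺`, for every `λ > 1`. -/
theorem inverse_ratio_tendsto_zero_of_slowly_varying
    (φ φinv : ℝ → ℝ)
    (hcont : ContinuousOn φ (Set.Ici 0))
    (hanti : StrictAntiOn φ (Set.Ici 0))
    (hφ0 : φ 0 = 1)
    (hφtop : Tendsto φ atTop (𝓝 0))
    (hinv : ∀ u ∈ Set.Ioc (0:ℝ) 1, 0 ≤ φinv u ∧ φ (φinv u) = u)
    (hSV : ∀ lam > (0:ℝ), Tendsto (fun t => φ (lam * t) / φ t) atTop (𝓝 1)) :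
    ∀ lam > (1:ℝ),
      Tendsto (fun u => φinv (lam * u) / φinv u) (𝓝[>] (0:ℝ)) (𝓝 0) := by
  intro lam hlam
  rw [Metric.tendsto_nhds]
  intro ε hε
  have h1 := (hSV (ε / 2) (by positivity)).eventually (gt_mem_nhds hlam)
  obtain ⟨T0, hT0⟩ := eventually_atTop.1 h1
  obtain ⟨T, hTT0, hT1⟩ : ∃ T : ℝ, T0 ≤ T ∧ 1 ≤ T := ⟨max T0 1, le_max_left _ _, le_max_right _ _⟩
  have hT : 0 < φ T := by
    have h2 : 0 ≤ φ (T + 1) := by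
      refine le_of_tendsto hφtop ?_
      filter_upwards [eventually_ge_atTop (T + 1)] with x hx
      refine hanti.antitoneOn ?_ ?_ hx <;> simp only [Set.mem_Ici] <;> linarith
    have h3 : φ (T + 1) < φ T := by
      refine hanti ?_ ?_ (by linarith) <;> simp only [Set.mem_Ici] <;> linarith
    linarith
  have hl0 : 0 < lam := by linarith
  have hI : Set.Ioo (0:ℝ) (min (φ T) (1 / lam)) ∈ 𝓝[>] (0:ℝ) :=
    Ioo_mem_nhdsGT (lt_min hT (by positivity))
  filter_upwards [hI] with u hu
  obtain ⟨hu0, hu1⟩ := hu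
  have huT : u < φ T := lt_of_lt_of_le hu1 (min_le_left _ _)
  have hul : lam * u < 1 := by
    have := lt_of_lt_of_le hu1 (min_le_right _ _)
    rw [lt_div_iff₀ hl0] at this
    linarith
  have hlu : 0 < lam * u := by positivity
  obtain ⟨ha, hb⟩ := hinv u ⟨hu0, by nlinarith⟩
  obtain ⟨hc, hd⟩ := hinv (lam * u) ⟨hlu, hul.le⟩
  have hge : T ≤ φinv u := by
    by_contra! h
    have := hanti (Set.mem_Ici.2 ha) (Set.mem_Ici.2 (by linarith : (0:ℝ) ≤ T)) h
    linarith
  have h5 := hT0 (φinv u) (hTT0.trans hge)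
  rw [hb, div_lt_iff₀ hu0] at h5
  have hpos : 0 < φinv u := by linarith
  have h6 : φinv (lam * u) < ε / 2 * φinv u := by
    by_contra! h
    have h7 : (0:ℝ) ≤ ε / 2 * φinv u := by positivity
    have := hanti.antitoneOn (Set.mem_Ici.2 h7) (Set.mem_Ici.2 hc) h
    linarith
  rw [Real.dist_eq, sub_zero, abs_of_nonneg (by positivity), div_lt_iff₀ hpos]
  nlinarith
end

section
/- Let φ: [0,∞) → ℝ be continuous and strictly decreasing with φ(0) = 1 and φ(t) → 0 as t → ∞, and suppose φ is slowly varying at ∞ (i.e. φ(λt)/φ(t) → 1 as t → ∞ for every λ > 0). Then for every d ≥ 2 and every w = (w₁, …, w_d) ∈ (0,∞)^d, the limit lim_{u→0⁺} φ(∑_{i=1}^d φ⁻¹(u·wᵢ)) / u exists and equals min{w₁, …, w_d}. -/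
open Filter Topology

/-- Theorem 2.4: lower tail dependence of an Archimedean copula whose Laplace
transform `φ` is slowly varying at `∞` equals the minimum of the weights. -/
theorem archimedean_lower_tail_dependence_slowly_varying
    (φ φinv : ℝ → ℝ)
    (hcont : ContinuousOn φ (Set.Ici 0))
    (hanti : StrictAntiOn φ (Set.Ici 0))
    (hφ0 : φ 0 = 1)
    (hφtop : Tendsto φ atTop (𝓝 0))
    (hinv : ∀ u ∈ Set.Ioc (0:ℝ) 1, 0 ≤ φinv u ∧ φ (φinv u) = u)
    (hSV : ∀ lam > (0:ℝ), Tendsto (fun t => φ (lam * t) / φ t) atTop (𝓝 1))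
    (d : ℕ) (hd : 2 ≤ d) (w : Fin d → ℝ) (hw : ∀ i, 0 < w i) :
    Tendsto (fun u => φ (∑ i, φinv (u * w i)) / u) (𝓝[>] (0:ℝ))
      (𝓝 (⨅ i, w i)) := by
  have hd0 : 0 < d := by omega
  haveI : Nonempty (Fin d) := ⟨⟨0, hd0⟩⟩
  obtain ⟨j, hj⟩ := exists_eq_ciInf_of_finite (f := w)
  have hjm : ∀ i, w j ≤ w i := fun i => by
    rw [hj]; exact ciInf_le (Set.finite_range w).bddBelow i
  rw [← hj]
  have hmj := hw j
  have hpos : ∀ t, 0 ≤ t → 0 < φ t := by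
    intro t ht
    have h1 : φ (t + 1) < φ t :=
      hanti (Set.mem_Ici.2 ht) (Set.mem_Ici.2 (by linarith)) (by linarith)
    have h2 : 0 ≤ φ (t + 1) := by
      refine le_of_tendsto hφtop ?_
      filter_upwards [eventually_ge_atTop (t + 1)] with x hx
      exact hanti.antitoneOn (Set.mem_Ici.2 (by linarith)) (Set.mem_Ici.2 (by linarith)) hx
    linarith
  have hsmall : ∀ (c e : ℝ), 0 < c → 0 < e →
      ∀ᶠ u in 𝓝[>] (0:ℝ), 0 < u * c ∧ u * c < e := by
    intro c e hc he
    filter_upwards [Ioo_mem_nhdsGT (div_pos he hc)] with u hu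
    exact ⟨mul_pos hu.1 hc, (lt_div_iff₀ hc).1 hu.2⟩
  have hs : Tendsto (fun u => φinv (u * w j)) (𝓝[>] (0:ℝ)) atTop := by
    rw [tendsto_atTop]
    intro M
    have hM : (0:ℝ) ≤ max M 0 := le_max_right _ _
    filter_upwards [hsmall (w j) _ hmj (hpos _ hM), hsmall (w j) 1 hmj one_pos] with u h1 h2
    obtain ⟨h3, h4⟩ := hinv (u * w j) ⟨h2.1, h2.2.le⟩
    by_contra hlt
    push Not at hlt
    have h5 : φ (max M 0) ≤ φ (φinv (u * w j)) :=
      hanti.antitoneOn (Set.mem_Ici.2 h3) (Set.mem_Ici.2 hM) (hlt.le.trans (le_max_left _ _))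
    linarith [h1.2]
  have hlow : Tendsto (fun u => φ ((d:ℝ) * φinv (u * w j)) / φ (φinv (u * w j)) * w j)
      (𝓝[>] (0:ℝ)) (𝓝 (w j)) := by
    have h := ((hSV d (by exact_mod_cast hd0)).comp hs).mul_const (w j)
    simpa [Function.comp_def] using h
  have hall : ∀ᶠ u in 𝓝[>] (0:ℝ), ∀ i, 0 < u * w i ∧ u * w i < 1 :=
    eventually_all.2 fun i => hsmall (w i) 1 (hw i) one_pos
  have hkey : ∀ᶠ u in 𝓝[>] (0:ℝ), 0 < u ∧ φ (φinv (u * w j)) = u * w j ∧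
      φ ((d:ℝ) * φinv (u * w j)) ≤ φ (∑ i, φinv (u * w i)) ∧
      φ (∑ i, φinv (u * w i)) ≤ u * w j := by
    filter_upwards [hall, self_mem_nhdsWithin] with u hu hu0
    have hu0 : 0 < u := hu0
    have hi : ∀ i, 0 ≤ φinv (u * w i) ∧ φ (φinv (u * w i)) = u * w i :=
      fun i => hinv _ ⟨(hu i).1, (hu i).2.le⟩
    have hle : ∀ i, φinv (u * w i) ≤ φinv (u * w j) := by
      intro i
      by_contra hlt
      push Not at hlt
      have h := hanti (Set.mem_Ici.2 (hi j).1) (Set.mem_Ici.2 (hi i).1) hlt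
      rw [(hi i).2, (hi j).2] at h
      have := mul_le_mul_of_nonneg_left (hjm i) hu0.le
      linarith
    have hS0 : 0 ≤ ∑ i, φinv (u * w i) := Finset.sum_nonneg fun i _ => (hi i).1
    have hS1 : φinv (u * w j) ≤ ∑ i, φinv (u * w i) :=
      Finset.single_le_sum (f := fun i => φinv (u * w i)) (fun i _ => (hi i).1)
        (Finset.mem_univ j)
    have hS2 : ∑ i, φinv (u * w i) ≤ (d:ℝ) * φinv (u * w j) := by
      have h := Finset.sum_le_sum (s := Finset.univ) fun i _ => hle i
      simpa using h
    refine ⟨hu0, (hi j).2, ?_, ?_⟩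
    · exact hanti.antitoneOn (Set.mem_Ici.2 hS0) (Set.mem_Ici.2 (hS0.trans hS2)) hS2
    · have h := hanti.antitoneOn (Set.mem_Ici.2 (hi j).1) (Set.mem_Ici.2 hS0) hS1
      rwa [(hi j).2] at h
  refine tendsto_of_tendsto_of_tendsto_of_le_of_le' hlow tendsto_const_nhds ?_ ?_
  · filter_upwards [hkey] with u ⟨h0, h1, h2, _⟩
    rw [h1]
    have : φ ((d:ℝ) * φinv (u * w j)) / (u * w j) * w j = φ ((d:ℝ) * φinv (u * w j)) / u := by
      field_simp
    rw [this]
    exact div_le_div_of_nonneg_right h2 h0.le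
  · filter_upwards [hkey] with u ⟨h0, _, _, h3⟩
    rw [div_le_iff₀ h0]
    linarith
end

section
/- Let φ(x) = 1/log(x+e) for x ≥ 0, so that φ⁻¹(u) = e^{1/u} − e for 0 < u ≤ 1. Then for all w₁ > 0 and w₂ > 0, lim_{u→0⁺} φ(φ⁻¹(u·w₁) + φ⁻¹(u·w₂)) / u = min{w₁, w₂}; equivalently, lim_{u→0⁺} (1 / log(e^{1/(u w₁)} + e^{1/(u w₂)} − e)) / u = min{w₁, w₂}. -/
open Filter Topology

theorem aux_le (a b : ℝ) (ha : 0 < a) (hb : 0 < b) (hab : a ≤ b) :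
    Tendsto
      (fun u => (1 / Real.log
        (Real.exp (1 / (u * a)) + Real.exp (1 / (u * b)) - Real.exp 1)) / u)
      (𝓝[>] (0:ℝ)) (𝓝 a) := by
  have key : Tendsto (fun u : ℝ => u * Real.log
        (Real.exp (1 / (u * a)) + Real.exp (1 / (u * b)) - Real.exp 1))
      (𝓝[>] (0:ℝ)) (𝓝 a⁻¹) := by
    have hup : Tendsto (fun u : ℝ => a⁻¹ + u * Real.log 2) (𝓝[>] (0:ℝ)) (𝓝 a⁻¹) := by
      have h : Continuous (fun u : ℝ => a⁻¹ + u * Real.log 2) := by fun_prop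
      have h2 := h.tendsto 0
      simp only [zero_mul, add_zero] at h2
      exact h2.mono_left nhdsWithin_le_nhds
    have hev : ∀ᶠ u : ℝ in 𝓝[>] (0:ℝ), 0 < u ∧ u < b⁻¹ := by
      have := Ioo_mem_nhdsGT (inv_pos.mpr hb)
      filter_upwards [this] with u hu using hu
    have hb1 : ∀ u : ℝ, 0 < u → u < b⁻¹ →
        Real.exp 1 ≤ Real.exp (1 / (u * b)) ∧
        Real.exp (1 / (u * b)) ≤ Real.exp (1 / (u * a)) := by
      intro u h0 h1
      have h2 : u * b ≤ 1 := by
        have := mul_le_mul_of_nonneg_right h1.le hb.le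
        rwa [inv_mul_cancel₀ hb.ne'] at this
      have hub : 0 < u * b := mul_pos h0 hb
      have hua : 0 < u * a := mul_pos h0 ha
      constructor
      · apply Real.exp_le_exp.mpr
        rw [le_div_iff₀ hub]; linarith
      · apply Real.exp_le_exp.mpr
        exact one_div_le_one_div_of_le hua (mul_le_mul_of_nonneg_left hab h0.le)
    refine tendsto_of_tendsto_of_tendsto_of_le_of_le' tendsto_const_nhds hup ?_ ?_
    · filter_upwards [hev] with u ⟨h0, h1⟩
      obtain ⟨e1, e2⟩ := hb1 u h0 h1
      have hl : 1 / (u * a) ≤ Real.log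
        (Real.exp (1 / (u * a)) + Real.exp (1 / (u * b)) - Real.exp 1) := by
        rw [Real.le_log_iff_exp_le (by linarith [Real.exp_pos (1 / (u * a))])]
        linarith
      have := mul_le_mul_of_nonneg_left hl h0.le
      have h3 : u * (1 / (u * a)) = a⁻¹ := by field_simp
      rwa [h3] at this
    · filter_upwards [hev] with u ⟨h0, h1⟩
      obtain ⟨e1, e2⟩ := hb1 u h0 h1
      have hl : Real.log
        (Real.exp (1 / (u * a)) + Real.exp (1 / (u * b)) - Real.exp 1)
          ≤ 1 / (u * a) + Real.log 2 := by
        rw [Real.log_le_iff_le_exp (by linarith [Real.exp_pos (1 / (u * a))]),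
          Real.exp_add, Real.exp_log two_pos]
        linarith [Real.exp_pos 1]
      have := mul_le_mul_of_nonneg_left hl h0.le
      have h3 : u * (1 / (u * a)) = a⁻¹ := by field_simp
      rwa [mul_add, h3] at this
  have h := key.inv₀ (inv_ne_zero ha.ne')
  rw [inv_inv] at h
  refine h.congr fun u => ?_
  generalize Real.log _ = L
  rw [mul_inv, one_div, div_eq_mul_inv, mul_comm]

/-- Example 2.6: for `φ(x) = 1/log(x+e)`, with inverse `φ⁻¹(u) = e^(1/u) - e`,
the lower tail dependence function of the associated bivariate Archimedean
copula is `min{w₁, w₂}`. -/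
theorem archimedean_log_generator_tail_dependence
    (w₁ w₂ : ℝ) (hw₁ : 0 < w₁) (hw₂ : 0 < w₂) :
    Tendsto
      (fun u => (1 / Real.log
        (Real.exp (1 / (u * w₁)) + Real.exp (1 / (u * w₂)) - Real.exp 1)) / u)
      (𝓝[>] (0:ℝ)) (𝓝 (min w₁ w₂)) := by
  rcases le_total w₁ w₂ with h | h
  · rw [min_eq_left h]
    exact aux_le w₁ w₂ hw₁ hw₂ h
  · rw [min_eq_right h]
    refine (aux_le w₂ w₁ hw₂ hw₁ h).congr fun u => ?_
    rw [add_comm (Real.exp (1 / (u * w₂)))]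
end

section
/- Let φ: [0,∞) → ℝ be continuous and strictly decreasing with φ(0) = 1 and φ(t) → 0 as t → ∞. Suppose φ ∈ Γ_α(g) for some α > 0, where g: [0,∞) → (0,∞) is self-neglecting and ultimately decreasing, and suppose that for some integer d ≥ 2 and some real k with 1 ≤ k ≤ d, lim_{t→∞} φ(t·d)/φ(t)^k = τ for some τ > 0. Then lim_{t→∞} g(t)/g(t·d) = k/d. -/
open Filter Topology

/-- Step in Theorem 3.3: under `φ ∈ Γ_α(g)` with `g` self-neglecting and
ultimately decreasing, the condition `φ(td)/φ(t)^k → τ > 0` forces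
`g(t)/g(td) → k/d`. -/
theorem gamma_class_ratio_limit
    (φ g : ℝ → ℝ)
    (hcont : ContinuousOn φ (Set.Ici 0))
    (hanti : StrictAntiOn φ (Set.Ici 0))
    (hφ0 : φ 0 = 1)
    (hφtop : Tendsto φ atTop (𝓝 0))
    (hgpos : ∀ t ≥ (0:ℝ), 0 < g t)
    (hsn1 : Tendsto (fun t => g t / t) atTop (𝓝 0))
    (hsn2 : ∀ x : ℝ, Tendsto (fun t => g (t + x * g t) / g t) atTop (𝓝 1))
    (hgdec : ∃ T ≥ (0:ℝ), AntitoneOn g (Set.Ici T))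
    (α : ℝ) (hα : 0 < α)
    (hGamma : ∀ x : ℝ,
      Tendsto (fun t => φ (t + x * g t) / φ t) atTop (𝓝 (Real.exp (-α * x))))
    (d : ℕ) (hd : 2 ≤ d) (k : ℝ) (hk1 : 1 ≤ k) (hkd : k ≤ d)
    (τ : ℝ) (hτ : 0 < τ)
    (hratio : Tendsto (fun t => φ (t * d) / (φ t) ^ k) atTop (𝓝 τ)) :
    Tendsto (fun t => g t / g (t * d)) atTop (𝓝 (k / d)) := by
  have hd0 : (0:ℝ) < d := by
    have : 0 < d := by omega
    exact_mod_cast this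
  have hk0 : 0 < k := by linarith
  have hpos : ∀ t ≥ (0:ℝ), 0 < φ t := by
    intro t ht
    have h1 : φ (t + 1) < φ t :=
      hanti (Set.mem_Ici.2 ht) (Set.mem_Ici.2 (by linarith)) (by linarith)
    have h2 : 0 ≤ φ (t + 1) := by
      refine le_of_tendsto hφtop ?_
      filter_upwards [eventually_ge_atTop (t + 1)] with u hu
      exact hanti.antitoneOn (Set.mem_Ici.2 (by linarith)) (Set.mem_Ici.2 (by linarith)) hu
    linarith
  have hs : Tendsto (fun t => t + 1 * g t) atTop atTop := by
    refine tendsto_atTop_mono' _ ?_ tendsto_id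
    filter_upwards [eventually_ge_atTop (0:ℝ)] with t ht
    have := hgpos t ht
    simp only [id]
    linarith
  have htd : Tendsto (fun t : ℝ => t * (d:ℝ)) atTop atTop :=
    tendsto_id.atTop_mul_const hd0
  have hmain : Tendsto (fun t => φ ((t + 1 * g t) * d) / φ (t * d)) atTop
      (𝓝 (Real.exp (-α * k))) := by
    have h1 := hratio.comp hs
    have h2 := (hGamma 1).rpow_const (p := k) (Or.inr hk0.le)
    have h3 := (h1.div hratio hτ.ne').mul h2
    have e : τ / τ * Real.exp (-α * 1) ^ k = Real.exp (-α * k) := by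
      rw [div_self hτ.ne', one_mul, ← Real.exp_mul]
      ring_nf
    rw [e] at h3
    refine h3.congr' ?_
    filter_upwards [eventually_ge_atTop (0:ℝ)] with t ht
    have hg := hgpos t ht
    have p1 := hpos t ht
    have p2 := hpos (t + 1 * g t) (by linarith)
    have p3 := hpos (t * d) (by positivity)
    have q1 := Real.rpow_pos_of_pos p1 k
    have q2 := Real.rpow_pos_of_pos p2 k
    simp only [Function.comp, Pi.div_apply]
    rw [Real.div_rpow p2.le p1.le]
    generalize φ (t + 1 * g t) ^ k = a at *
    generalize φ t ^ k = b at *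
    field_simp
  have hr : Tendsto (fun t => d * g t / g (t * d)) atTop (𝓝 k) := by
    rw [tendsto_order]
    constructor
    · intro y hy
      have hG := (hGamma y).comp htd
      have hlt : Real.exp (-α * k) < Real.exp (-α * y) := by
        rw [Real.exp_lt_exp]; nlinarith
      filter_upwards [hmain.eventually_lt hG hlt, eventually_ge_atTop (0:ℝ)] with t h ht
      have hg := hgpos t ht
      have hg2 := hgpos (t * d) (by positivity)
      have p3 := hpos (t * d) (by positivity)
      have m0 : 0 ≤ t * d := by positivity
      have m1 : 0 < d * g t := by positivity
      by_contra hc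
      push Not at hc
      rw [div_le_iff₀ hg2] at hc
      simp only [Function.comp] at h
      rw [div_lt_div_iff_of_pos_right p3] at h
      refine absurd h (not_lt.2 (hanti.antitoneOn (Set.mem_Ici.2 ?_) (Set.mem_Ici.2 ?_) ?_)) <;>
        linarith
    · intro y hy
      have hG := (hGamma y).comp htd
      have hlt : Real.exp (-α * y) < Real.exp (-α * k) := by
        rw [Real.exp_lt_exp]; nlinarith
      filter_upwards [hG.eventually_lt hmain hlt, eventually_ge_atTop (0:ℝ)] with t h ht
      have hg := hgpos t ht
      have hg2 := hgpos (t * d) (by positivity)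
      have p3 := hpos (t * d) (by positivity)
      have m0 : 0 ≤ t * d := by positivity
      have m1 : 0 < d * g t := by positivity
      have m2 : 0 < y * g (t * d) := mul_pos (by linarith) hg2
      by_contra hc
      push Not at hc
      rw [le_div_iff₀ hg2] at hc
      simp only [Function.comp] at h
      rw [div_lt_div_iff_of_pos_right p3] at h
      refine absurd h (not_lt.2 (hanti.antitoneOn (Set.mem_Ici.2 ?_) (Set.mem_Ici.2 ?_) ?_)) <;>
        linarith
  refine (hr.div_const (d:ℝ)).congr ?_
  intro t
  field_simp
end

section
/- Let φ: [0,∞) → ℝ be continuous and strictly decreasing with φ(0) = 1 and φ(t) → 0 as t → ∞. Suppose φ ∈ Γ_α(g) for some α > 0, where g: [0,∞) → (0,∞) is self-neglecting and ultimately decreasing, and suppose that for some integer d ≥ 2 and some real k with 1 ≤ k ≤ d, lim_{t→∞} φ(t·d)/φ(t)^k = τ for some τ > 0. Then for every w = (w₁, …, w_d) ∈ (0,∞)^d, lim_{u→0⁺} φ(∑_{i=1}^d φ⁻¹(u·wᵢ)) / u^k = τ · ∏_{i=1}^d wᵢ^{k/d}. -/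
open Filter Topology

/-- Theorem 3.3: `k`-th order lower tail dependence of an Archimedean copula
whose Laplace transform `φ ∈ Γ_α(g)` is rapidly varying. -/
theorem archimedean_tail_dependence_rapidly_varying
    (φ φinv g : ℝ → ℝ)
    (hcont : ContinuousOn φ (Set.Ici 0))
    (hanti : StrictAntiOn φ (Set.Ici 0))
    (hφ0 : φ 0 = 1)
    (hφtop : Tendsto φ atTop (𝓝 0))
    (hinv : ∀ u ∈ Set.Ioc (0:ℝ) 1, 0 ≤ φinv u ∧ φ (φinv u) = u)
    (hgpos : ∀ t ≥ (0:ℝ), 0 < g t)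
    (hsn1 : Tendsto (fun t => g t / t) atTop (𝓝 0))
    (hsn2 : ∀ x : ℝ, Tendsto (fun t => g (t + x * g t) / g t) atTop (𝓝 1))
    (hgdec : ∃ T ≥ (0:ℝ), AntitoneOn g (Set.Ici T))
    (α : ℝ) (hα : 0 < α)
    (hGamma : ∀ x : ℝ,
      Tendsto (fun t => φ (t + x * g t) / φ t) atTop (𝓝 (Real.exp (-α * x))))
    (d : ℕ) (hd : 2 ≤ d) (k : ℝ) (hk1 : 1 ≤ k) (hkd : k ≤ d)
    (τ : ℝ) (hτ : 0 < τ)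
    (hratio : Tendsto (fun t => φ (t * d) / (φ t) ^ k) atTop (𝓝 τ))
    (w : Fin d → ℝ) (hw : ∀ i, 0 < w i) :
    Tendsto (fun u => φ (∑ i, φinv (u * w i)) / u ^ k) (𝓝[>] (0:ℝ))
      (𝓝 (τ * ∏ i, (w i) ^ (k / d))) := by
  have hφnn : ∀ t, 0 ≤ t → 0 < φ t := by
    intro t ht
    have h1 : φ (t + 1) < φ t :=
      hanti (Set.mem_Ici.2 ht) (Set.mem_Ici.2 (by linarith)) (by linarith)
    have h2 : 0 ≤ φ (t + 1) := by
      apply le_of_tendsto hφtop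
      filter_upwards [eventually_ge_atTop (t + 1)] with s hs
      exact hanti.antitoneOn (Set.mem_Ici.2 (by linarith)) (Set.mem_Ici.2 (by linarith)) hs
    linarith
  have hmem1 : ∀ c : ℝ, 0 < c → ∀ᶠ u in 𝓝[>] (0:ℝ), 0 < u ∧ u < c := by
    intro c hc
    filter_upwards [Ioo_mem_nhdsGT hc] with u hu
    exact hu
  have hA : Tendsto φinv (𝓝[>] (0:ℝ)) atTop := by
    rw [tendsto_atTop]
    intro M
    filter_upwards [hmem1 1 one_pos, hmem1 _ (hφnn (max M 0) (le_max_right _ _))]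
      with u h1 h2
    obtain ⟨h3, h4⟩ := hinv u ⟨h1.1, h1.2.le⟩
    by_contra! h
    have h5 : φ (max M 0) < φ (φinv u) :=
      hanti (Set.mem_Ici.2 h3) (Set.mem_Ici.2 (le_max_right _ _))
        (lt_of_lt_of_le h (le_max_left _ _))
    linarith [h2.2]
  have hSh : ∀ y : ℝ, Tendsto (fun t => t + y * g t) atTop atTop := by
    intro y
    have h1 : Tendsto (fun t : ℝ => 1 + y * (g t / t)) atTop (𝓝 1) := by
      simpa using (hsn1.const_mul y).const_add 1
    have h2 := Tendsto.atTop_mul_pos one_pos tendsto_id h1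
    refine h2.congr' ?_
    filter_upwards [eventually_gt_atTop 0] with t ht
    simp only [id]
    field_simp
  have hB1 : ∀ v x : ℝ, 0 < v → Real.exp (-α * x) < v →
      ∀ᶠ u in 𝓝[>] (0:ℝ), φinv (u * v) ≤ φinv u + x * g (φinv u) := by
    intro v x hv hx
    filter_upwards [hA.eventually ((hGamma x).eventually_lt_const hx),
      hA.eventually ((hSh x).eventually_ge_atTop 0), hmem1 1 one_pos,
      hmem1 _ (inv_pos.2 hv)] with u h1 h2 h3 h4
    have h5 := (hinv u ⟨h3.1, h3.2.le⟩).2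
    have h6 : u * v ≤ 1 := by
      have := mul_lt_mul_of_pos_right h4.2 hv
      rw [inv_mul_cancel₀ hv.ne'] at this
      exact this.le
    have h7 := hinv (u * v) ⟨mul_pos h3.1 hv, h6⟩
    rw [h5, div_lt_iff₀ h3.1] at h1
    by_contra! h
    have := hanti (Set.mem_Ici.2 h2) (Set.mem_Ici.2 h7.1) h
    rw [h7.2] at this
    linarith [mul_comm u v]
  have hB2 : ∀ v x : ℝ, 0 < v → v < Real.exp (-α * x) →
      ∀ᶠ u in 𝓝[>] (0:ℝ), φinv u + x * g (φinv u) ≤ φinv (u * v) := by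
    intro v x hv hx
    filter_upwards [hA.eventually ((hGamma x).eventually_const_lt hx),
      hA.eventually ((hSh x).eventually_ge_atTop 0), hmem1 1 one_pos,
      hmem1 _ (inv_pos.2 hv)] with u h1 h2 h3 h4
    have h5 := (hinv u ⟨h3.1, h3.2.le⟩).2
    have h6 : u * v ≤ 1 := by
      have := mul_lt_mul_of_pos_right h4.2 hv
      rw [inv_mul_cancel₀ hv.ne'] at this
      exact this.le
    have h7 := hinv (u * v) ⟨mul_pos h3.1 hv, h6⟩
    rw [h5, lt_div_iff₀ h3.1] at h1
    by_contra! h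
    have := hanti (Set.mem_Ici.2 h7.1) (Set.mem_Ici.2 h2) h
    rw [h7.2] at this
    linarith [mul_comm u v]
  have hC : ∀ y : ℝ, Tendsto (fun u => φ ((φinv u + y * g (φinv u)) * d) / u ^ k)
      (𝓝[>] (0:ℝ)) (𝓝 (τ * Real.exp (-α * y) ^ k)) := by
    intro y
    have h1 := hratio.comp ((hSh y).comp hA)
    have h2 := ((hGamma y).comp hA).rpow_const (p := k) (Or.inl (Real.exp_pos _).ne')
    refine (h1.mul h2).congr' ?_
    filter_upwards [hA.eventually ((hSh y).eventually_ge_atTop 0), hmem1 1 one_pos]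
      with u h3 h4
    have h5 := (hinv u ⟨h4.1, h4.2.le⟩).2
    have h6 := hφnn _ h3
    have h7 := Real.rpow_pos_of_pos h6 k
    have h8 := Real.rpow_pos_of_pos h4.1 k
    simp only [Function.comp]
    rw [h5, Real.div_rpow h6.le h4.1.le]
    field_simp
  have hd0 : (0:ℝ) < d := by
    have : 0 < d := by omega
    exact_mod_cast this
  have hsum : ∀ e s : ℝ, ∀ t : ℝ, ∑ i : Fin d, (t + (-Real.log (w i) / α + e) * s)
      = (t + (-(∑ i, Real.log (w i)) / (α * d) + e) * s) * d := by
    intro e s t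
    rw [Finset.sum_add_distrib, ← Finset.sum_mul, Finset.sum_add_distrib, ← Finset.sum_div,
      Finset.sum_neg_distrib]
    simp only [Finset.sum_const, Finset.card_univ, Fintype.card_fin, nsmul_eq_mul]
    field_simp
  have hexp : ∀ i e, Real.exp (-α * (-Real.log (w i) / α + e)) = w i * Real.exp (-α * e) := by
    intro i e
    rw [show -α * (-Real.log (w i) / α + e) = Real.log (w i) + -α * e by field_simp; ring,
      Real.exp_add, Real.exp_log (hw i)]
  set Y : ℝ := -(∑ i, Real.log (w i)) / (α * d) with hY
  have hL : τ * ∏ i, (w i) ^ (k / d) = τ * Real.exp (-α * (Y + 0)) ^ k := by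
    congr 1
    rw [← Real.exp_mul, hY]
    simp_rw [fun i => Real.rpow_def_of_pos (hw i) (k / d)]
    rw [← Real.exp_sum, ← Finset.sum_mul]
    congr 1
    field_simp
    ring
  have hLc : Continuous (fun e : ℝ => τ * Real.exp (-α * (Y + e)) ^ k) := by
    simp_rw [← Real.exp_mul]
    fun_prop
  have hLt : Tendsto (fun e : ℝ => τ * Real.exp (-α * (Y + e)) ^ k) (𝓝 0)
      (𝓝 (τ * ∏ i, (w i) ^ (k / d))) := by
    rw [hL]
    exact hLc.tendsto 0
  have hwu : ∀ᶠ u in 𝓝[>] (0:ℝ), ∀ i, 0 ≤ φinv (u * w i) := by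
    rw [eventually_all]
    intro i
    filter_upwards [hmem1 _ (inv_pos.2 (hw i))] with u h4
    have h6 : u * w i ≤ 1 := by
      have := mul_lt_mul_of_pos_right h4.2 (hw i)
      rw [inv_mul_cancel₀ (hw i).ne'] at this
      exact this.le
    exact (hinv _ ⟨mul_pos h4.1 (hw i), h6⟩).1
  rw [tendsto_order]
  constructor
  · intro a ha
    obtain ⟨e, he, he0⟩ := (((hLt.mono_left nhdsWithin_le_nhds).eventually_const_lt ha).and
      (self_mem_nhdsWithin : Set.Ioi (0:ℝ) ∈ 𝓝[>] (0:ℝ))).exists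
    have he0 : 0 < e := he0
    have hlt : ∀ i, Real.exp (-α * (-Real.log (w i) / α + e)) < w i := by
      intro i
      rw [hexp]
      have : Real.exp (-α * e) < 1 := Real.exp_lt_one_iff.2 (by nlinarith)
      nlinarith [hw i]
    filter_upwards [(hC (Y + e)).eventually_const_lt he, hwu, hmem1 1 one_pos,
      eventually_all.2 (fun i => hB1 (w i) _ (hw i) (hlt i))] with u h1 h2 h3 h4
    refine lt_of_lt_of_le h1 ?_
    have h5 : ∑ i, φinv (u * w i) ≤ (φinv u + (Y + e) * g (φinv u)) * d := by
      rw [← hsum]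
      exact Finset.sum_le_sum (fun i _ => h4 i)
    have h6 : 0 ≤ ∑ i, φinv (u * w i) := Finset.sum_nonneg (fun i _ => h2 i)
    have h7 := Real.rpow_pos_of_pos h3.1 k
    exact div_le_div_of_nonneg_right
      (hanti.antitoneOn (Set.mem_Ici.2 h6) (Set.mem_Ici.2 (h6.trans h5)) h5) h7.le
  · intro a ha
    obtain ⟨e, he, he0⟩ := (((hLt.mono_left nhdsWithin_le_nhds).eventually_lt_const ha).and
      (self_mem_nhdsWithin : Set.Iio (0:ℝ) ∈ 𝓝[<] (0:ℝ))).exists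
    have he0 : e < 0 := he0
    have hlt : ∀ i, w i < Real.exp (-α * (-Real.log (w i) / α + e)) := by
      intro i
      rw [hexp]
      have : 1 < Real.exp (-α * e) := Real.one_lt_exp_iff.2 (by nlinarith)
      nlinarith [hw i]
    filter_upwards [(hC (Y + e)).eventually_lt_const he, hwu, hmem1 1 one_pos,
      hA.eventually ((hSh (Y + e)).eventually_ge_atTop 0),
      eventually_all.2 (fun i => hB2 (w i) _ (hw i) (hlt i))] with u h1 h2 h3 h8 h4
    refine lt_of_le_of_lt ?_ h1
    have h5 : (φinv u + (Y + e) * g (φinv u)) * d ≤ ∑ i, φinv (u * w i) := by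
      rw [← hsum]
      exact Finset.sum_le_sum (fun i _ => h4 i)
    have h6 : 0 ≤ (φinv u + (Y + e) * g (φinv u)) * d := mul_nonneg h8 hd0.le
    have h7 := Real.rpow_pos_of_pos h3.1 k
    exact div_le_div_of_nonneg_right
      (hanti.antitoneOn (Set.mem_Ici.2 h6) (Set.mem_Ici.2 (h6.trans h5)) h5) h7.le
end

section
/- Let θ > 0 and let φ(t) = −log(1 − (1 − e^{−θ})e^{−t})/θ for t ≥ 0, with inverse φ⁻¹ on (0,1]. Then for all w₁ > 0 and w₂ > 0, lim_{u→0⁺} φ(φ⁻¹(u·w₁) + φ⁻¹(u·w₂)) / u² = (θ/(1 − e^{−θ}))·w₁·w₂. -/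
open Filter Topology

lemma frank_aux_x (c : ℝ) (hc : 0 < c) :
    Tendsto (fun u : ℝ => (1 - Real.exp (-(c * u))) / u) (𝓝[>] (0:ℝ)) (𝓝 c) := by
  have h : HasDerivAt (fun u : ℝ => 1 - Real.exp (-(c * u))) c 0 := by
    have h1 : HasDerivAt (fun u : ℝ => -(c * u)) (-(c * 1)) 0 :=
      ((hasDerivAt_id (0:ℝ)).const_mul c).neg
    have h2 := (h1.exp).const_sub 1
    simpa using h2
  have h3 := (hasDerivAt_iff_tendsto_slope_zero.1 h).mono_left
    (nhdsWithin_mono (0:ℝ) (fun x (hx : 0 < x) => ne_of_gt hx))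
  refine h3.congr (fun u => ?_)
  simp [div_eq_inv_mul]

lemma frank_aux_log :
    Tendsto (fun y : ℝ => -Real.log (1 - y) / y) (𝓝[≠] (0:ℝ)) (𝓝 1) := by
  have h : HasDerivAt (fun y : ℝ => -Real.log (1 - y)) 1 0 := by
    have h1 : HasDerivAt (fun y : ℝ => 1 - y) (-1) 0 := (hasDerivAt_id (0:ℝ)).const_sub 1
    have h2 := (h1.log (by norm_num)).neg
    have h3 : -(-1 / (1 - 0)) = (1:ℝ) := by norm_num
    rw [h3] at h2
    exact h2
  refine (hasDerivAt_iff_tendsto_slope_zero.1 h).congr (fun u => ?_)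
  simp [div_eq_inv_mul]

/-- Example 3.5 (Frank copula): the second-order lower tail dependence function
of the bivariate Frank copula is `(θ/(1-e^{-θ})) w₁ w₂`. -/
theorem frank_copula_second_order_tail_dependence
    (θ : ℝ) (hθ : 0 < θ)
    (φ φinv : ℝ → ℝ)
    (hφ : ∀ t ≥ (0:ℝ),
      φ t = -Real.log (1 - (1 - Real.exp (-θ)) * Real.exp (-t)) / θ)
    (hinv : ∀ u ∈ Set.Ioc (0:ℝ) 1, 0 ≤ φinv u ∧ φ (φinv u) = u)
    (w₁ w₂ : ℝ) (hw₁ : 0 < w₁) (hw₂ : 0 < w₂) :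
    Tendsto (fun u => φ (φinv (u * w₁) + φinv (u * w₂)) / u ^ 2)
      (𝓝[>] (0:ℝ)) (𝓝 ((θ / (1 - Real.exp (-θ))) * w₁ * w₂)) := by
  set a := 1 - Real.exp (-θ) with ha
  have ha0 : 0 < a := by
    have : Real.exp (-θ) < 1 := Real.exp_lt_one_iff.2 (by linarith)
    linarith
  have ha1 : a < 1 := by
    have := Real.exp_pos (-θ)
    linarith
  have key : ∀ v ∈ Set.Ioc (0:ℝ) 1, a * Real.exp (-φinv v) = 1 - Real.exp (-(θ * v)) := by
    intro v hv
    obtain ⟨h0, h1⟩ := hinv v hv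
    rw [hφ _ h0] at h1
    have hle : Real.exp (-φinv v) ≤ 1 := Real.exp_le_one_iff.2 (by linarith)
    have hpos : 0 < 1 - a * Real.exp (-φinv v) := by nlinarith
    have h2 : Real.log (1 - a * Real.exp (-φinv v)) = -(θ * v) := by
      field_simp at h1
      linarith
    rw [← h2, Real.exp_log hpos]
    ring
  let y : ℝ → ℝ := fun u =>
    (1 - Real.exp (-((θ * w₁) * u))) * (1 - Real.exp (-((θ * w₂) * u))) / a
  have hpos : ∀ c > (0:ℝ), ∀ u > (0:ℝ), 0 < 1 - Real.exp (-(c * u)) := by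
    intro c hc u hu
    have : Real.exp (-(c * u)) < 1 := Real.exp_lt_one_iff.2 (by have := mul_pos hc hu; linarith)
    linarith
  have hy0 : ∀ u > (0:ℝ), 0 < y u := fun u hu =>
    div_pos (mul_pos (hpos _ (mul_pos hθ hw₁) u hu) (hpos _ (mul_pos hθ hw₂) u hu)) ha0
  have hyt : Tendsto y (𝓝[>] (0:ℝ)) (𝓝[≠] (0:ℝ)) := by
    refine tendsto_nhdsWithin_iff.2 ⟨?_, ?_⟩
    · have hc : Continuous y := by fun_prop
      have := hc.tendsto 0
      have h0 : y 0 = 0 := by simp [y]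
      rw [h0] at this
      exact this.mono_left nhdsWithin_le_nhds
    · filter_upwards [self_mem_nhdsWithin] with u hu
      exact (hy0 u hu).ne'
  have hlim := ((frank_aux_log.comp hyt).mul
    (((frank_aux_x (θ * w₁) (mul_pos hθ hw₁)).mul
      (frank_aux_x (θ * w₂) (mul_pos hθ hw₂))).div_const a)).div_const θ
  have hval : 1 * (θ * w₁ * (θ * w₂) / a) / θ = θ / a * w₁ * w₂ := by
    field_simp
  rw [hval] at hlim
  refine hlim.congr' ?_
  have hsmall : ∀ w > (0:ℝ), ∀ᶠ u in 𝓝[>] (0:ℝ), u * w ∈ Set.Ioc (0:ℝ) 1 := by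
    intro w hw
    filter_upwards [Ioo_mem_nhdsGT (show (0:ℝ) < 1 / w by positivity)] with u hu
    exact ⟨mul_pos hu.1 hw, ((lt_div_iff₀ hw).1 hu.2).le⟩
  filter_upwards [hsmall w₁ hw₁, hsmall w₂ hw₂, self_mem_nhdsWithin] with u h1 h2 hu
  have hu0 : (0:ℝ) < u := hu
  have e : a * Real.exp (-(φinv (u * w₁) + φinv (u * w₂))) = y u := by
    have k1 := key _ h1
    have k2 := key _ h2
    have r1 : θ * w₁ * u = θ * (u * w₁) := by ring
    have r2 : θ * w₂ * u = θ * (u * w₂) := by ring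
    simp only [y]
    rw [r1, r2, ← k1, ← k2, neg_add, Real.exp_add]
    field_simp
  rw [hφ _ (add_nonneg (hinv _ h1).1 (hinv _ h2).1), e]
  have hyne := (hy0 u hu0).ne'
  have e2 : (1 - Real.exp (-(θ * w₁ * u))) / u * ((1 - Real.exp (-(θ * w₂ * u))) / u) / a
      = y u / u ^ 2 := by
    simp only [y]
    field_simp
  simp only [Function.comp_apply]
  rw [e2]
  field_simp
end

section
/- Let θ ≥ 1 and let φ(t) = 1 − (1 − e^{−t})^{1/θ} for t ≥ 0, with inverse φ⁻¹ on (0,1]. Then for all w₁ > 0 and w₂ > 0, lim_{u→0⁺} φ(φ⁻¹(u·w₁) + φ⁻¹(u·w₂)) / u² = θ·w₁·w₂. -/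
open Filter Topology

lemma b5_aux (a : ℝ) : ∃ G : ℝ → ℝ, Tendsto G (𝓝 0) (𝓝 a) ∧
    ∀ x, 1 - (1 - x) ^ a = x * G x := by
  have hd : HasDerivAt (fun x : ℝ => 1 - (1 - x) ^ a) a 0 := by
    have h1 : HasDerivAt (fun x : ℝ => 1 - x) (-1) 0 := by
      simpa using (hasDerivAt_id (0:ℝ)).const_sub 1
    have h2 := (h1.rpow_const (p := a) (Or.inl (by norm_num))).const_sub 1
    simpa using h2
  refine ⟨dslope (fun x : ℝ => 1 - (1 - x) ^ a) 0, ?_, fun x => ?_⟩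
  · have h := (continuousAt_dslope_same.2 hd.differentiableAt).tendsto
    rwa [dslope_same, hd.deriv] at h
  · have h := sub_smul_dslope (fun x : ℝ => 1 - (1 - x) ^ a) 0 x
    simpa using h.symm

/-- Example 3.6 (B5 copula): the second-order lower tail dependence function
of the bivariate B5 copula is `θ w₁ w₂`. -/
theorem b5_copula_second_order_tail_dependence
    (θ : ℝ) (hθ : 1 ≤ θ)
    (φ φinv : ℝ → ℝ)
    (hφ : ∀ t ≥ (0:ℝ), φ t = 1 - (1 - Real.exp (-t)) ^ (1 / θ))
    (hinv : ∀ u ∈ Set.Ioc (0:ℝ) 1, 0 ≤ φinv u ∧ φ (φinv u) = u)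
    (w₁ w₂ : ℝ) (hw₁ : 0 < w₁) (hw₂ : 0 < w₂) :
    Tendsto (fun u => φ (φinv (u * w₁) + φinv (u * w₂)) / u ^ 2)
      (𝓝[>] (0:ℝ)) (𝓝 (θ * w₁ * w₂)) := by
  have hθ0 : θ ≠ 0 := by positivity
  obtain ⟨G, hG, hGe⟩ := b5_aux θ
  obtain ⟨H, hH, hHe⟩ := b5_aux (1 / θ)
  have key : ∀ v ∈ Set.Ioc (0:ℝ) 1, Real.exp (-φinv v) = v * G v := by
    intro v hv
    obtain ⟨h0, h1⟩ := hinv v hv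
    rw [hφ _ h0] at h1
    have h2 : (0:ℝ) ≤ 1 - Real.exp (-φinv v) := by
      have : Real.exp (-φinv v) ≤ 1 := Real.exp_le_one_iff.2 (by linarith)
      linarith
    have h3 : 1 - v = (1 - Real.exp (-φinv v)) ^ (1 / θ) := by linarith
    rw [← hGe, h3, ← Real.rpow_mul h2, one_div_mul_cancel hθ0, Real.rpow_one]
    ring
  have t : ∀ w : ℝ, Tendsto (fun u : ℝ => u * w) (𝓝[>] 0) (𝓝 0) := by
    intro w
    have : Tendsto (fun u : ℝ => u * w) (𝓝 0) (𝓝 (0 * w)) := tendsto_id.mul_const w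
    rw [zero_mul] at this
    exact this.mono_left nhdsWithin_le_nhds
  have g1 := hG.comp (t w₁)
  have g2 := hG.comp (t w₂)
  have p := ((t w₁).mul g1).mul ((t w₂).mul g2)
  simp only [zero_mul] at p
  have h := hH.comp p
  have fin := ((g1.mul g2).mul h).const_mul (w₁ * w₂)
  have e : w₁ * w₂ * (θ * θ * (1 / θ)) = θ * w₁ * w₂ := by field_simp
  rw [e] at fin
  refine fin.congr' ?_
  filter_upwards [self_mem_nhdsWithin, (t w₁).eventually_le_const zero_lt_one,
    (t w₂).eventually_le_const zero_lt_one] with u hu l1 l2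
  have hu : 0 < u := hu
  have m1 : u * w₁ ∈ Set.Ioc (0:ℝ) 1 := ⟨by positivity, l1⟩
  have m2 : u * w₂ ∈ Set.Ioc (0:ℝ) 1 := ⟨by positivity, l2⟩
  rw [hφ _ (add_nonneg (hinv _ m1).1 (hinv _ m2).1), neg_add, Real.exp_add, key _ m1, key _ m2, hHe]
  simp only [Function.comp]
  field_simp
end

section
/- Let 0 ≤ θ < 1 and α > 0, and let φ(t) = ((1−θ)e^{−t}/(1 − θe^{−t}))^α for t ≥ 0, with inverse φ⁻¹ on (0,1]. Then for all w₁ > 0 and w₂ > 0, lim_{u→0⁺} φ(φ⁻¹(u·w₁) + φ⁻¹(u·w₂)) / u² = (1−θ)^{−α}·w₁·w₂. -/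
open Filter Topology

/-- Example 3.7 (negative binomial): the second-order lower tail dependence
function of the associated bivariate Archimedean copula is
`(1-θ)^{-α} w₁ w₂`. -/
theorem negative_binomial_copula_second_order_tail_dependence
    (θ α : ℝ) (hθ0 : 0 ≤ θ) (hθ1 : θ < 1) (hα : 0 < α)
    (φ φinv : ℝ → ℝ)
    (hφ : ∀ t ≥ (0:ℝ),
      φ t = ((1 - θ) * Real.exp (-t) / (1 - θ * Real.exp (-t))) ^ α)
    (hinv : ∀ u ∈ Set.Ioc (0:ℝ) 1, 0 ≤ φinv u ∧ φ (φinv u) = u)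
    (w₁ w₂ : ℝ) (hw₁ : 0 < w₁) (hw₂ : 0 < w₂) :
    Tendsto (fun u => φ (φinv (u * w₁) + φinv (u * w₂)) / u ^ 2)
      (𝓝[>] (0:ℝ)) (𝓝 ((1 - θ) ^ (-α) * w₁ * w₂)) := by
  have hc : 0 < 1 - θ := by linarith
  have key : ∀ v ∈ Set.Ioc (0:ℝ) 1,
      Real.exp (-φinv v) = v ^ (1/α) / ((1 - θ) + θ * v ^ (1/α)) := by
    intro v hv
    obtain ⟨h0, h1⟩ := hinv v hv
    rw [hφ _ h0] at h1
    have he : 0 < Real.exp (-φinv v) := Real.exp_pos _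
    have he1 : Real.exp (-φinv v) ≤ 1 := Real.exp_le_one_iff.2 (by linarith)
    generalize Real.exp (-φinv v) = e at *
    have hd : 0 < 1 - θ * e := by nlinarith
    have hx : v ^ (1/α) = (1 - θ) * e / (1 - θ * e) := by
      rw [← h1, ← Real.rpow_mul (by positivity), mul_one_div_cancel hα.ne', Real.rpow_one]
    have hxp : 0 < v ^ (1/α) := Real.rpow_pos_of_pos hv.1 _
    rw [eq_div_iff hd.ne'] at hx
    rw [eq_div_iff (by positivity)]
    linarith
  have hlim : ∀ w : ℝ, Tendsto (fun u : ℝ => (u * w) ^ (1/α)) (𝓝[>] (0:ℝ)) (𝓝 0) := by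
    intro w
    have hcont : ContinuousAt (fun u : ℝ => (u * w) ^ (1/α)) 0 :=
      ContinuousAt.rpow_const (by fun_prop) (Or.inr (by positivity))
    have h := hcont.tendsto
    simp only [zero_mul] at h
    rw [Real.zero_rpow (by positivity)] at h
    exact h.mono_left nhdsWithin_le_nhds
  have hmain : Tendsto (fun u : ℝ => ((1 - θ) / (((1 - θ) + θ * (u * w₁) ^ (1/α)) *
      ((1 - θ) + θ * (u * w₂) ^ (1/α)) - θ * ((u * w₁) ^ (1/α) * (u * w₂) ^ (1/α)))) ^ α
      * w₁ * w₂) (𝓝[>] (0:ℝ)) (𝓝 ((1 - θ) ^ (-α) * w₁ * w₂)) := by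
    have hD := (((hlim w₁).const_mul θ).const_add (1 - θ)).mul
      (((hlim w₂).const_mul θ).const_add (1 - θ))
    have hD2 := hD.sub (((hlim w₁).mul (hlim w₂)).const_mul θ)
    have hne : (1 - θ + θ * 0) * (1 - θ + θ * 0) - θ * (0 * 0) ≠ 0 := by
      simp [hc.ne']
    have hq := ((tendsto_const_nhds (x := 1 - θ)).div hD2 hne).rpow_const
      (p := α) (Or.inr hα.le)
    have hv : ((1 - θ) / ((1 - θ + θ * 0) * (1 - θ + θ * 0) - θ * (0 * 0))) ^ α
        = (1 - θ) ^ (-α) := by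
      rw [Real.rpow_neg hc.le, ← Real.inv_rpow hc.le]
      congr 1
      simp only [mul_zero, add_zero, sub_zero]
      field_simp
    rw [hv] at hq
    exact (hq.mul_const w₁).mul_const w₂
  have hsmall : ∀ w : ℝ, ∀ᶠ u in 𝓝[>] (0:ℝ), u * w < 1 := by
    intro w
    have h : Tendsto (fun u : ℝ => u * w) (𝓝[>] (0:ℝ)) (𝓝 (0 * w)) :=
      ((continuous_id.mul continuous_const).tendsto 0).mono_left nhdsWithin_le_nhds
    exact h.eventually_lt_const (by simp)
  refine hmain.congr' ?_
  filter_upwards [hsmall w₁, hsmall w₂, self_mem_nhdsWithin] with u h1 h2 hu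
  have hu : 0 < u := hu
  have p1 : 0 < u * w₁ := by positivity
  have p2 : 0 < u * w₂ := by positivity
  have k1 := key _ ⟨p1, h1.le⟩
  have k2 := key _ ⟨p2, h2.le⟩
  have n1 := (hinv _ ⟨p1, h1.le⟩).1
  have n2 := (hinv _ ⟨p2, h2.le⟩).1
  rw [hφ _ (add_nonneg n1 n2), neg_add, Real.exp_add, k1, k2]
  have e1 : ((u * w₁) ^ (1/α)) ^ α = u * w₁ := by
    rw [← Real.rpow_mul p1.le, one_div_mul_cancel hα.ne', Real.rpow_one]
  have e2 : ((u * w₂) ^ (1/α)) ^ α = u * w₂ := by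
    rw [← Real.rpow_mul p2.le, one_div_mul_cancel hα.ne', Real.rpow_one]
  have x1 : 0 < (u * w₁) ^ (1/α) := Real.rpow_pos_of_pos p1 _
  have x2 : 0 < (u * w₂) ^ (1/α) := Real.rpow_pos_of_pos p2 _
  have y1 : (u * w₁) ^ (1/α) ≤ 1 := Real.rpow_le_one p1.le h1.le (by positivity)
  generalize (u * w₁) ^ (1/α) = x at *
  generalize (u * w₂) ^ (1/α) = y at *
  have hD : 0 < ((1 - θ) + θ * x) * ((1 - θ) + θ * y) - θ * (x * y) := by
    have : 0 ≤ (1 - θ) * θ * (x + y * (1 - x)) := by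
      have : 0 ≤ 1 - x := by linarith
      positivity
    nlinarith [mul_pos hc hc]
  have hx : 0 < (1 - θ) + θ * x := by positivity
  have hy : 0 < (1 - θ) + θ * y := by positivity
  have hE : (1 - θ) * (x / (1 - θ + θ * x) * (y / (1 - θ + θ * y))) /
      (1 - θ * (x / (1 - θ + θ * x) * (y / (1 - θ + θ * y)))) =
      (1 - θ) / (((1 - θ) + θ * x) * ((1 - θ) + θ * y) - θ * (x * y)) * (x * y) := by
    have h3 : 1 - θ * (x / (1 - θ + θ * x) * (y / (1 - θ + θ * y))) =
      (((1 - θ) + θ * x) * ((1 - θ) + θ * y) - θ * (x * y)) /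
        ((1 - θ + θ * x) * (1 - θ + θ * y)) := by
      field_simp
    rw [h3]
    generalize ((1 - θ) + θ * x) * ((1 - θ) + θ * y) - θ * (x * y) = D at *
    field_simp
  rw [hE, Real.mul_rpow (by positivity) (by positivity), Real.mul_rpow x1.le x2.le, e1, e2]
  field_simp
end

section
/- Let θ ≥ 1 and let φ(t) = exp(−t^{1/θ}) for t ≥ 0, with inverse φ⁻¹(u) = (log(1/u))^θ for 0 < u ≤ 1. Then for all w₁ > 0 and w₂ > 0, lim_{u→0⁺} φ(φ⁻¹(u·w₁) + φ⁻¹(u·w₂)) / u^{2^{1/θ}} = (w₁·w₂)^{2^{−1+1/θ}}; equivalently, lim_{u→0⁺} exp(−((log(1/(u w₁)))^θ + (log(1/(u w₂)))^θ)^{1/θ}) / u^{2^{1/θ}} = (w₁ w₂)^{2^{−1+1/θ}}. -/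
open Filter Topology

/-- Example 3.8 (Gumbel copula): the lower tail dependence function of tail
order `k = 2^{1/θ}` of the bivariate Gumbel copula, with
`φ(t) = exp(-t^{1/θ})` and `φ⁻¹(u) = (log(1/u))^θ`, is
`(w₁w₂)^{2^{-1+1/θ}}`. -/
theorem gumbel_copula_tail_dependence
    (θ : ℝ) (hθ : 1 ≤ θ)
    (w₁ w₂ : ℝ) (hw₁ : 0 < w₁) (hw₂ : 0 < w₂) :
    Tendsto
      (fun u => Real.exp (-(((Real.log (1 / (u * w₁))) ^ θ
          + (Real.log (1 / (u * w₂))) ^ θ) ^ (1 / θ)))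
        / u ^ ((2:ℝ) ^ (1 / θ)))
      (𝓝[>] (0:ℝ)) (𝓝 ((w₁ * w₂) ^ ((2:ℝ) ^ (-1 + 1 / θ)))) := by
  have hθ0 : θ ≠ 0 := by linarith
  set a := Real.log w₁ with ha
  set b := Real.log w₂ with hb
  let G : ℝ → ℝ := fun s => ((1 - a * s) ^ θ + (1 - b * s) ^ θ) ^ (1 / θ)
  have lin : ∀ c : ℝ, HasDerivAt (fun s : ℝ => (1 - c * s) ^ θ) (-c * θ) 0 := by
    intro c
    have h1 : HasDerivAt (fun s : ℝ => 1 - c * s) (-c) 0 := by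
      simpa using ((hasDerivAt_id (0:ℝ)).const_mul c).const_sub 1
    have h2 := h1.rpow_const (p := θ) (Or.inl (by simp))
    simpa using h2
  have hG0 : G 0 = (2:ℝ) ^ (1 / θ) := by
    simp only [G, mul_zero, sub_zero, Real.one_rpow]
    norm_num
  have hG : HasDerivAt G (-((a + b) * (2:ℝ) ^ (-1 + 1 / θ))) 0 := by
    have h3 := ((lin a).add (lin b)).rpow_const (p := 1 / θ) (Or.inl (by simp))
    refine HasDerivAt.congr_deriv (f := G) h3 ?_
    simp only [Pi.add_apply, mul_zero, sub_zero, Real.one_rpow]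
    rw [show (1:ℝ) + 1 = 2 by norm_num, show -1 + 1 / θ = 1 / θ - 1 by ring]
    field_simp
    ring
  have hslope := hG.tendsto_slope_zero
  have hL : Tendsto (fun u : ℝ => -Real.log u) (𝓝[>] (0:ℝ)) atTop :=
    tendsto_neg_atBot_atTop.comp Real.tendsto_log_nhdsGT_zero
  have hs : Tendsto (fun u : ℝ => (-Real.log u)⁻¹) (𝓝[>] (0:ℝ)) (𝓝[≠] 0) :=
    (tendsto_inv_atTop_nhdsGT_zero.comp hL).mono_right
      (nhdsWithin_mono _ (fun x hx => ne_of_gt hx))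
  have hmain := (Real.continuous_exp.tendsto _).comp (hslope.comp hs).neg
  have hlim : Real.exp (- -((a + b) * (2:ℝ) ^ (-1 + 1 / θ)))
      = (w₁ * w₂) ^ ((2:ℝ) ^ (-1 + 1 / θ)) := by
    rw [Real.rpow_def_of_pos (mul_pos hw₁ hw₂), Real.log_mul hw₁.ne' hw₂.ne', neg_neg]
  rw [hlim] at hmain
  refine hmain.congr' ?_
  filter_upwards [self_mem_nhdsWithin, hL.eventually_gt_atTop 0, hL.eventually_gt_atTop a,
    hL.eventually_gt_atTop b] with u hu h0 h1 h2
  have hu : 0 < u := hu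
  simp only [Function.comp_apply, zero_add, smul_eq_mul, inv_inv, hG0]
  have lg : ∀ w : ℝ, 0 < w → Real.log (1 / (u * w)) = -Real.log u - Real.log w := by
    intro w hw
    rw [one_div, Real.log_inv, Real.log_mul hu.ne' hw.ne']
    ring
  rw [lg w₁ hw₁, lg w₂ hw₂, ← ha, ← hb, Real.rpow_def_of_pos hu, ← Real.exp_sub]
  obtain ⟨L, hLu⟩ : ∃ L, L = -Real.log u := ⟨_, rfl⟩
  have hlu : Real.log u = -L := by rw [hLu, neg_neg]
  rw [← hLu] at h0 h1 h2 ⊢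
  rw [hlu]
  have hf : ∀ c : ℝ, c < L → (L - c) ^ θ = L ^ θ * (1 - c * L⁻¹) ^ θ := by
    intro c hc
    have e : L - c = L * (1 - c * L⁻¹) := by field_simp
    have hp : 0 ≤ 1 - c * L⁻¹ := by
      have : 0 < L * (1 - c * L⁻¹) := by rw [← e]; linarith
      exact (pos_of_mul_pos_right this h0.le).le
    rw [e, Real.mul_rpow h0.le hp]
  have hp : ∀ c : ℝ, c < L → 0 ≤ (1 - c * L⁻¹) ^ θ := by
    intro c hc
    apply Real.rpow_nonneg
    have : c * L⁻¹ < 1 := by rw [← div_eq_mul_inv, div_lt_one h0]; exact hc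
    linarith
  have key : ((L - a) ^ θ + (L - b) ^ θ) ^ (1 / θ) = L * G L⁻¹ := by
    rw [hf a h1, hf b h2, ← mul_add, Real.mul_rpow (Real.rpow_nonneg h0.le _)
      (add_nonneg (hp a h1) (hp b h2)), ← Real.rpow_mul h0.le, mul_one_div_cancel hθ0,
      Real.rpow_one]
  rw [key]
  congr 1
  ring
end
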